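/- arXiv:1004.5211 — 4 statements merged into one kernel-verified Lean document; each statement's English description precedes it below -/
import Mathlib

section
/- For every integer k ≥ 1, the Gauss sum Σ_{q=0}^{2k−1} exp(iπ q²/(2k)) equals e^{iπ/4}·√(2k), and likewise Σ_{q=0}^{2k−1} exp(−iπ q²/(2k)) equals e^{−iπ/4}·√(2k). -/
open Complex Finset
open Filter Topology

/-!
Near a rational cusp `a / c` with `a * c` even, splitting the theta series into residue classes
modulo `c` and applying Poisson summation to each class shows that `θ(a / c - 1 / w) / √(-iw)`
tends to `G(a, c) / c` as `im w → ∞`, where `G(a, c) = ∑ exp(πi a r² / c)` over `0 ≤ r < c`.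
The transformation `τ ↦ -1 / τ` exchanges the cusps `a / c` and `-c / a`, so the functional
equation `θ(-1 / τ) = √(-iτ) θ(τ)` compares the two limits. This is the Landsberg–Schaar
reciprocity `√a G(a, c) = exp(πi / 4) √c G(-c, a)`. Since `G(·, 1) = 1`, the pairs `(1, 2k)` and
`(2k, 1)` give the sums with exponents of either sign.
-/

lemma tsum_int_eq_sum_range_tsum {R : Type*} [AddCommGroup R] [UniformSpace R]
    [IsUniformAddGroup R] [CompleteSpace R] [T0Space R] {f : ℤ → R} (hf : Summable f)
    {N : ℕ} (hN : N ≠ 0) :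
    ∑' n, f n = ∑ r ∈ range N, ∑' m : ℤ, f (m * N + r) := by
  have : NeZero N := ⟨hN⟩
  have hsum : Summable fun p : Fin N × ℤ ↦ f (p.2 * N + (p.1 : ℕ)) :=
    ((Equiv.prodComm _ _).trans (Int.divModEquiv N).symm).summable_iff.mpr hf
  calc ∑' n, f n
      = ∑' p : Fin N × ℤ, f (p.2 * N + (p.1 : ℕ)) :=
        (((Equiv.prodComm _ _).trans (Int.divModEquiv N).symm).tsum_eq f).symm
    _ = ∑ r : Fin N, ∑' m : ℤ, f (m * N + (r : ℕ)) := by rw [hsum.tsum_prod, tsum_fintype]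
    _ = ∑ r ∈ range N, ∑' m : ℤ, f (m * N + r) :=
        Fin.sum_univ_eq_sum_range (fun r : ℕ ↦ ∑' m : ℤ, f (m * N + r)) N

lemma ofReal_mul_cpow {t : ℝ} (ht : 0 ≤ t) (z r : ℂ) :
    ((t : ℂ) * z) ^ r = (t : ℂ) ^ r * z ^ r := by
  rcases eq_or_ne r 0 with rfl | hr
  · simp
  rcases ht.eq_or_lt with rfl | ht
  · simp [zero_cpow hr]
  rcases eq_or_ne z 0 with rfl | hz
  · simp [zero_cpow hr]
  have ht' : (t : ℂ) ≠ 0 := ofReal_ne_zero.mpr ht.ne'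
  rw [cpow_def_of_ne_zero (mul_ne_zero ht' hz), cpow_def_of_ne_zero ht',
    cpow_def_of_ne_zero hz, log_ofReal_mul ht hz, ofReal_log ht.le, add_mul, exp_add]

lemma ofReal_cpow_one_half {t : ℝ} (ht : 0 ≤ t) : (t : ℂ) ^ (1 / 2 : ℂ) = (√t : ℝ) := by
  rw [Real.sqrt_eq_rpow, ofReal_cpow ht]
  norm_num

lemma neg_I_cpow_one_half : (-I) ^ (1 / 2 : ℂ) = exp (-(Real.pi * I / 4)) := by
  rw [cpow_def_of_ne_zero (neg_ne_zero.mpr I_ne_zero), log_neg_I]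
  congr 1
  ring

lemma jacobiTheta₂_div_neg_one_div (z : ℂ) {τ : ℂ} (hτ : τ ≠ 0) :
    jacobiTheta₂ (z / τ) (-1 / τ) =
      (-I * τ) ^ (1 / 2 : ℂ) * exp (Real.pi * I * z ^ 2 / τ) * jacobiTheta₂ z τ := by
  have hroot : (-I * τ) ^ (1 / 2 : ℂ) ≠ 0 := by simp [cpow_eq_zero_iff, hτ]
  have hexp : exp (-Real.pi * I * z ^ 2 / τ) = (exp (Real.pi * I * z ^ 2 / τ))⁻¹ := by
    rw [← exp_neg, neg_mul, neg_mul, neg_div]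
  rw [jacobiTheta₂_functional_equation z τ, hexp]
  field_simp [hroot, exp_ne_zero]

lemma jacobiTheta_neg_one_div {τ : ℂ} (hτ : τ ≠ 0) :
    jacobiTheta (-1 / τ) = (-I * τ) ^ (1 / 2 : ℂ) * jacobiTheta τ := by
  simpa [jacobiTheta_eq_jacobiTheta₂] using jacobiTheta₂_div_neg_one_div 0 hτ

lemma exp_mul_jacobiTheta₂_neg_one_div_sq {s : ℝ} (hs : 0 < s) (z : ℂ) {w : ℂ} (hw : w ≠ 0) :
    exp (Real.pi * I * z ^ 2 * (-1 / w)) *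
        jacobiTheta₂ (s * z * (-1 / w)) ((s : ℂ) ^ 2 * (-1 / w)) =
      (-I * w) ^ (1 / 2 : ℂ) / s * jacobiTheta₂ (-z / s) (w / (s : ℂ) ^ 2) := by
  have hs' : (s : ℂ) ≠ 0 := ofReal_ne_zero.mpr hs.ne'
  have hroot : (-I * (w / (s : ℂ) ^ 2)) ^ (1 / 2 : ℂ) = (-I * w) ^ (1 / 2 : ℂ) / s := by
    have hsplit : -I * (w / (s : ℂ) ^ 2) = ((s ^ 2)⁻¹ : ℝ) * (-I * w) := by
      push_cast
      ring
    rw [hsplit, ofReal_mul_cpow (by positivity), ofReal_cpow_one_half (by positivity),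
      Real.sqrt_inv, Real.sqrt_sq hs.le, ofReal_inv, inv_mul_eq_div]
  have hfst : s * z * (-1 / w) = -z / s / (w / (s : ℂ) ^ 2) := by field_simp
  have hsnd : (s : ℂ) ^ 2 * (-1 / w) = -1 / (w / (s : ℂ) ^ 2) := by field_simp
  have hexp : exp (Real.pi * I * (-z / s) ^ 2 / (w / (s : ℂ) ^ 2)) =
      (exp (Real.pi * I * z ^ 2 * (-1 / w)))⁻¹ := by
    rw [← exp_neg]
    congr 1
    field_simp
  rw [hfst, hsnd, jacobiTheta₂_div_neg_one_div _ (div_ne_zero hw (pow_ne_zero 2 hs')), hroot, hexp]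
  field_simp [exp_ne_zero]

lemma tendsto_jacobiTheta₂_term_comap_im_atTop (n : ℤ) (z : ℂ) :
    Tendsto (jacobiTheta₂_term n z) (comap im atTop) (𝓝 ((Pi.single 0 1 : ℤ → ℂ) n)) := by
  rcases eq_or_ne n 0 with rfl | hn
  · have hone : jacobiTheta₂_term 0 z = fun _ ↦ 1 := by
      ext
      simp [jacobiTheta₂_term]
    rw [hone, Pi.single_eq_same]
    exact tendsto_const_nhds
  · rw [Pi.single_eq_of_ne hn, tendsto_zero_iff_norm_tendsto_zero]
    simp_rw [norm_jacobiTheta₂_term]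
    have hcoeff : -Real.pi * (n : ℝ) ^ 2 < 0 := by
      have : (n : ℝ) ≠ 0 := mod_cast hn
      have := Real.pi_pos
      rw [neg_mul, neg_lt_zero]
      positivity
    exact Real.tendsto_exp_atBot.comp <| tendsto_atBot_add_const_right _ _ <|
      tendsto_comap.const_mul_atTop_of_neg hcoeff

lemma tendsto_jacobiTheta₂_comap_im_atTop (z : ℂ) :
    Tendsto (jacobiTheta₂ z) (comap im atTop) (𝓝 1) := by
  have hbound : ∀ᶠ τ in comap im atTop, ∀ n : ℤ,
      ‖jacobiTheta₂_term n z τ‖ ≤ Real.exp (-Real.pi * (1 * n ^ 2 - 2 * |z.im| * |n|)) :=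
    (tendsto_comap.eventually_ge_atTop 1).mono fun τ hτ ↦
      norm_jacobiTheta₂_term_le one_pos le_rfl hτ
  have hsummable : Summable fun n : ℤ ↦
      Real.exp (-Real.pi * (1 * n ^ 2 - 2 * |z.im| * |n|)) := by
    simpa using summable_pow_mul_jacobiTheta₂_term_bound |z.im| one_pos 0
  rw [← tsum_pi_single (0 : ℤ) (1 : ℂ)]
  exact tendsto_tsum_of_dominated_convergence hsummable
    (fun n ↦ tendsto_jacobiTheta₂_term_comap_im_atTop n z) hbound

/-- The quadratic Gauss sum `G(a, c) = ∑ exp(πi a r² / c)`, with `r` running over `0, …, c - 1`.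
With `πi` instead of `2πi` in the exponent, the summand only depends on `r` modulo `c` when
`a * c` is even. -/
noncomputable def quadraticGaussSum (a : ℤ) (c : ℕ) : ℂ :=
  ∑ r ∈ range c, exp (Real.pi * I * a * (r : ℂ) ^ 2 / c)

lemma quadraticGaussSum_one_right (a : ℤ) : quadraticGaussSum a 1 = 1 := by
  simp [quadraticGaussSum]

/-- The theta function near the cusp `x`, divided by its order of growth there: the point
`x - 1 / w` tends to `x` as `im w` tends to infinity. -/
noncomputable def cuspTheta (x : ℝ) (w : ℂ) : ℂ :=
  jacobiTheta (x - 1 / w) / (-I * w) ^ (1 / 2 : ℂ)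

section Cusp

variable {a : ℤ} {c : ℕ}

lemma jacobiTheta₂_term_residue (hc : c ≠ 0) (hac : Even (a * c)) (δ : ℂ) (m : ℤ) (r : ℕ) :
    jacobiTheta₂_term (m * c + r) 0 (a / c + δ) =
      exp (Real.pi * I * a * (r : ℂ) ^ 2 / c) *
        (exp (Real.pi * I * (r : ℂ) ^ 2 * δ) *
          jacobiTheta₂_term m (c * r * δ) ((c : ℂ) ^ 2 * δ)) := by
  obtain ⟨b, hb⟩ := hac
  have hb' : (a : ℂ) * c = b + b := mod_cast hb
  have hc' : (c : ℂ) ≠ 0 := mod_cast hc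
  rw [jacobiTheta₂_term, jacobiTheta₂_term, ← exp_add, ← exp_add, exp_eq_exp_iff_exists_int]
  refine ⟨b * m ^ 2 + a * m * r, ?_⟩
  push_cast
  field_simp
  linear_combination (m : ℂ) ^ 2 * c * hb'

lemma jacobiTheta_div_add (hc : c ≠ 0) (hac : Even (a * c)) {δ : ℂ} (hδ : 0 < δ.im) :
    jacobiTheta (a / c + δ) = ∑ r ∈ range c, exp (Real.pi * I * a * (r : ℂ) ^ 2 / c) *
      (exp (Real.pi * I * (r : ℂ) ^ 2 * δ) * jacobiTheta₂ (c * r * δ) ((c : ℂ) ^ 2 * δ)) := by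
  have him : 0 < ((a : ℂ) / c + δ).im := by
    have : ((a : ℂ) / c).im = 0 := mod_cast ofReal_im ((a : ℝ) / c)
    rwa [add_im, this, zero_add]
  rw [jacobiTheta_eq_jacobiTheta₂, jacobiTheta₂,
    tsum_int_eq_sum_range_tsum ((summable_jacobiTheta₂_term_iff 0 _).mpr him) hc]
  simp_rw [jacobiTheta₂_term_residue hc hac, tsum_mul_left, jacobiTheta₂]

lemma cuspTheta_div (hc : c ≠ 0) (hac : Even (a * c)) {w : ℂ} (hw : 0 < w.im) :
    cuspTheta (a / c) w = (∑ r ∈ range c, exp (Real.pi * I * a * (r : ℂ) ^ 2 / c) *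
      jacobiTheta₂ (-r / c) (w / (c : ℂ) ^ 2)) / c := by
  have hw0 : w ≠ 0 := by rintro rfl; simp at hw
  have him : 0 < (-1 / w).im := by
    rw [neg_div, one_div, neg_im, inv_im, neg_div, neg_neg]
    exact div_pos hw (normSq_pos.mpr hw0)
  have hroot : (-I * w) ^ (1 / 2 : ℂ) ≠ 0 := by simp [cpow_eq_zero_iff, hw0]
  have hinv (r : ℕ) := exp_mul_jacobiTheta₂_neg_one_div_sq (Nat.cast_pos.mpr hc.bot_lt) r hw0
  simp only [ofReal_natCast] at hinv
  have harg : ((a / c : ℝ) : ℂ) - 1 / w = a / c + -1 / w := by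
    push_cast
    ring
  rw [cuspTheta, harg, jacobiTheta_div_add hc hac him, div_eq_iff hroot, sum_div, sum_mul]
  refine sum_congr rfl fun r _ ↦ ?_
  rw [hinv]
  ring

lemma tendsto_cuspTheta_div (hc : c ≠ 0) (hac : Even (a * c)) :
    Tendsto (cuspTheta (a / c)) (comap im atTop) (𝓝 (quadraticGaussSum a c / c)) := by
  have hscale : Tendsto (fun w : ℂ ↦ w / (c : ℂ) ^ 2) (comap im atTop) (comap im atTop) := by
    have him (w : ℂ) : (w / (c : ℂ) ^ 2).im = w.im / (c : ℝ) ^ 2 := by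
      exact_mod_cast div_ofReal_im w ((c : ℝ) ^ 2)
    rw [tendsto_comap_iff]
    exact (tendsto_comap.atTop_div_const (by positivity)).congr fun w ↦ (him w).symm
  have hsum : Tendsto (fun w ↦ (∑ r ∈ range c, exp (Real.pi * I * a * (r : ℂ) ^ 2 / c) *
      jacobiTheta₂ (-r / c) (w / (c : ℂ) ^ 2)) / c) (comap im atTop)
      (𝓝 (quadraticGaussSum a c / c)) := by
    refine (tendsto_finsetSum _ fun r _ ↦ ?_).div_const _
    simpa using ((tendsto_jacobiTheta₂_comap_im_atTop (-r / c)).comp hscale).const_mul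
      (exp (Real.pi * I * a * (r : ℂ) ^ 2 / c))
  exact hsum.congr' <| (tendsto_comap.eventually_gt_atTop 0).mono fun w hw ↦
    (cuspTheta_div hc hac hw).symm

end Cusp

lemma neg_one_div_sub_one_div {K : Type*} [Field K] {x w : K} (hx : x ≠ 0) (hw : w ≠ 0)
    (hxw : x * w - 1 ≠ 0) : -1 / (x - 1 / w) = -1 / x - 1 / (x ^ 2 * w - x) := by
  have hsub : x - 1 / w = (x * w - 1) / w := by field_simp
  have hfactor : x ^ 2 * w - x = x * (x * w - 1) := by ring
  rw [hsub, hfactor]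
  field_simp
  ring

lemma cuspTheta_neg_one_div {x t : ℝ} (hx : x ≠ 0) (ht : 0 < t) :
    cuspTheta (-1 / x) (x ^ 2 * (I * t) - x) =
      (x * -I + (t⁻¹ : ℝ)) ^ (1 / 2 : ℂ) / (x ^ 2 + x * I * (t⁻¹ : ℝ)) ^ (1 / 2 : ℂ) *
        cuspTheta x (I * t) := by
  have hx' : (x : ℂ) ≠ 0 := ofReal_ne_zero.mpr hx
  have ht' : (t : ℂ) ≠ 0 := ofReal_ne_zero.mpr ht.ne'
  have hIt : I * (t : ℂ) ≠ 0 := mul_ne_zero I_ne_zero ht'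
  have hxIt : x * (I * t) - 1 ≠ 0 := fun h ↦ by simpa using congrArg re h
  have hτ : x - 1 / (I * t) ≠ 0 := by
    rw [sub_div' hIt]
    exact div_ne_zero hxIt hIt
  have hnum : -I * (x - 1 / (I * t)) = x * -I + (t⁻¹ : ℝ) := by
    push_cast
    field_simp [I_ne_zero]
    ring
  have hden : (-I * (x ^ 2 * (I * t) - x)) ^ (1 / 2 : ℂ) =
      (-I * (I * t)) ^ (1 / 2 : ℂ) * (x ^ 2 + x * I * (t⁻¹ : ℝ)) ^ (1 / 2 : ℂ) := by
    have hreal : -I * (I * t) = t := by linear_combination -t * I_sq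
    rw [hreal, ← ofReal_mul_cpow ht.le]
    congr 1
    push_cast
    field_simp
    linear_combination -x * t * I_sq
  rw [cuspTheta, ofReal_div, ofReal_neg, ofReal_one, ← neg_one_div_sub_one_div hx' hIt hxIt,
    jacobiTheta_neg_one_div hτ, hnum, hden, cuspTheta]
  ring

lemma tendsto_cpow_one_half_div_cpow_one_half {x : ℝ} (hx : 0 < x) :
    Tendsto (fun u : ℂ ↦ (x * -I + u) ^ (1 / 2 : ℂ) / (x ^ 2 + x * I * u) ^ (1 / 2 : ℂ))
      (𝓝 0) (𝓝 (exp (-(Real.pi * I / 4)) / √x)) := by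
  have hx' : (x : ℂ) ≠ 0 := ofReal_ne_zero.mpr hx.ne'
  have hnum : (x * -I) ^ (1 / 2 : ℂ) = √x * exp (-(Real.pi * I / 4)) := by
    rw [ofReal_mul_cpow hx.le, ofReal_cpow_one_half hx.le, neg_I_cpow_one_half]
  have hden : ((x : ℂ) ^ 2) ^ (1 / 2 : ℂ) = √x * √x := by
    rw [← ofReal_pow, ofReal_cpow_one_half (sq_nonneg x), Real.sqrt_sq hx.le, ← ofReal_mul,
      Real.mul_self_sqrt hx.le]
  have hcont : ContinuousAt (fun u : ℂ ↦
      (x * -I + u) ^ (1 / 2 : ℂ) / (x ^ 2 + x * I * u) ^ (1 / 2 : ℂ)) 0 := by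
    refine ContinuousAt.div (.cpow (by fun_prop) continuousAt_const ?_)
      (.cpow (by fun_prop) continuousAt_const ?_) ?_
    · simp [slitPlane, hx.ne']
    · simp [slitPlane, ← ofReal_pow, pow_pos hx]
    · simp [hx']
  convert hcont.tendsto using 2
  rw [add_zero, mul_zero, add_zero, hnum, hden,
    mul_div_mul_left _ _ (by simp [Real.sqrt_ne_zero', hx])]

lemma tendsto_mul_I_mul_sub_comap_im_atTop {p : ℝ} (hp : 0 < p) (q : ℝ) :
    Tendsto (fun t : ℝ ↦ p * (I * t) - q) atTop (comap im atTop) := by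
  rw [tendsto_comap_iff]
  simpa [Function.comp_def] using tendsto_id.const_mul_atTop hp

lemma eq_mul_of_tendsto_cuspTheta {x : ℝ} (hx : 0 < x) {L L' : ℂ}
    (hL : Tendsto (cuspTheta x) (comap im atTop) (𝓝 L))
    (hL' : Tendsto (cuspTheta (-1 / x)) (comap im atTop) (𝓝 L')) :
    L' = exp (-(Real.pi * I / 4)) / √x * L := by
  have hvertical : Tendsto (fun t : ℝ ↦ I * (t : ℂ)) atTop (comap im atTop) := by
    simpa using tendsto_mul_I_mul_sub_comap_im_atTop one_pos 0
  have hshifted : Tendsto (fun t : ℝ ↦ (x : ℂ) ^ 2 * (I * t) - x) atTop (comap im atTop) := by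
    simpa using tendsto_mul_I_mul_sub_comap_im_atTop (pow_pos hx 2) x
  have hinv : Tendsto (fun t : ℝ ↦ ((t⁻¹ : ℝ) : ℂ)) atTop (𝓝 0) :=
    (continuous_ofReal.tendsto' 0 0 ofReal_zero).comp tendsto_inv_atTop_zero
  have hfactor := (tendsto_cpow_one_half_div_cpow_one_half hx).comp hinv
  refine tendsto_nhds_unique (hL'.comp hshifted) <|
    (hfactor.mul (hL.comp hvertical)).congr' <| (eventually_gt_atTop 0).mono fun t ht ↦ ?_
  exact (cuspTheta_neg_one_div hx.ne' ht).symm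

theorem quadraticGaussSum_reciprocity {a c : ℕ} (ha : a ≠ 0) (hc : c ≠ 0) (hac : Even (a * c)) :
    √a * quadraticGaussSum a c = exp (Real.pi * I / 4) * √c * quadraticGaussSum (-c) a := by
  have hx : (0 : ℝ) < a / c := by positivity
  have hcusp : Tendsto (cuspTheta (a / c)) (comap im atTop) (𝓝 (quadraticGaussSum a c / c)) :=
    by simpa using tendsto_cuspTheta_div (a := a) hc (mod_cast hac)
  have hcusp' : Tendsto (cuspTheta (-1 / (a / c))) (comap im atTop)
      (𝓝 (quadraticGaussSum (-c) a / a)) := by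
    have hneg : (-1 / (a / c) : ℝ) = ((-c : ℤ) : ℝ) / a := by
      push_cast
      field_simp
    rw [hneg]
    exact tendsto_cuspTheta_div ha (by rw [neg_mul, even_neg]; exact mod_cast mul_comm a c ▸ hac)
  have h := eq_mul_of_tendsto_cuspTheta hx hcusp hcusp'
  rw [Real.sqrt_div (by positivity), exp_neg] at h
  have hsa : ((√a : ℝ) : ℂ) ^ 2 = a := mod_cast Real.sq_sqrt a.cast_nonneg
  have hsc : ((√c : ℝ) : ℂ) ^ 2 = c := mod_cast Real.sq_sqrt c.cast_nonneg
  have hsa0 : ((√a : ℝ) : ℂ) ≠ 0 := by simpa using ha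
  have hsc0 : ((√c : ℝ) : ℂ) ≠ 0 := by simpa using hc
  rw [← hsa, ← hsc] at h
  push_cast at h
  field_simp [exp_ne_zero] at h
  linear_combination -h

/-- The Gauss sums `Σ_{q=0}^{2k-1} exp(± iπ q² / (2k))` equal `e^{± iπ/4} √(2k)`. -/
theorem gauss_sum_unit_framing (k : ℕ) (hk : 1 ≤ k) :
    (∑ q ∈ Finset.range (2 * k),
        Complex.exp (Real.pi * Complex.I * (q : ℂ) ^ 2 / (2 * (k : ℂ)))) =
      Complex.exp (Real.pi * Complex.I / 4) * (Real.sqrt (2 * k) : ℂ) ∧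
    (∑ q ∈ Finset.range (2 * k),
        Complex.exp (-(Real.pi * Complex.I * (q : ℂ) ^ 2 / (2 * (k : ℂ))))) =
      Complex.exp (-(Real.pi * Complex.I / 4)) * (Real.sqrt (2 * k) : ℂ) := by
  have hk0 : 2 * k ≠ 0 := by omega
  constructor
  · have h := quadraticGaussSum_reciprocity one_ne_zero hk0 (by simp)
    rw [quadraticGaussSum_one_right] at h
    simpa [quadraticGaussSum] using h
  · have h := quadraticGaussSum_reciprocity hk0 one_ne_zero (by simp)
    rw [quadraticGaussSum_one_right] at h
    rw [exp_neg, eq_inv_mul_iff_mul_eq₀ (exp_ne_zero _)]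
    simpa [quadraticGaussSum, neg_div] using h.symm
end

section
/- Let k ≥ 1 and n, N be natural numbers. Let 𝕃 be an N×N symmetric integer matrix, q : Fin N → ℤ, ℓ : Fin n → Fin N → ℤ, and ε : Fin n → ℤ with ε_i ∈ {1,−1} for every i. Set t_i = Σ_{α} q_α · ℓ_{iα}. Then Σ_{m}, where m ranges over all functions Fin n → {0,1,…,2k−1}, of exp(−(2πi/(4k))·(Σ_{αβ} q_α 𝕃_{αβ} q_β + 2 Σ_i m_i t_i + Σ_i ε_i m_i²)) equals [Σ_{m} exp(−(2πi/(4k)) Σ_i ε_i m_i²)] · exp(−(2πi/(4k))·(Σ_{αβ} q_α 𝕃_{αβ} q_β − Σ_i ε_i t_i²)). In particular the surgery ratio ⟨W(L)W(𝓛)⟩/⟨W(𝓛)⟩ equals exp(−(2πi/(4k))·(q^T 𝕃 q − Σ_i ε_i t_i²)), which is again of the form exp(−(2πi/(4k)) q′^T 𝕃′ q′) for an integer quadratic form; this is the computational content of the theorem that the set of abelian Chern–Simons observables in any homology 3-sphere coincides with the set of observables in S³. -/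
open Complex Finset

/-!
Completing the square: if the linking matrix `A` of the surgery link is symmetric and `A s = t`,
then `m ᵀA m + 2 m ᵀt = (m + s) ᵀA (m + s) - s ᵀA s`. Replacing `m` by `m + 2k w` changes
`m ᵀA m` by a multiple of `4k`, so the phase of `m ᵀA m` depends only on the colours modulo `2k`
and the translation by `s` does not change the sum over a complete set of residues. For `A`
diagonal with entries `ε i = ±1` the solution is `s i = ε i * t i`.
-/

open Matrix

section PeriodicSums

variable {ι : Type*} {N : ℕ}

/-- The integer vector of representatives in `{0, …, N - 1}` of a vector of residues modulo `N`;
it turns the colours of the surgery link into integers. -/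
def residueLift (m : ι → Fin N) : ι → ℤ := fun i ↦ ((m i : ℕ) : ℤ)

variable [NeZero N]

open scoped Fin.CommRing

theorem residueLift_intCast (v : ι → ℤ) :
    residueLift (fun i ↦ (v i : Fin N)) = v - (N : ℤ) • fun i ↦ v i / N := by
  funext i
  have hmod : 0 ≤ v i % N := Int.emod_nonneg _ (NeZero.ne _)
  calc residueLift (fun i ↦ (v i : Fin N)) i = v i % N := by
        simp [residueLift, Fin.val_intCast, Int.toNat_of_nonneg hmod]
    _ = v i - N * (v i / N) := Int.emod_def _ _

variable [Fintype ι] [DecidableEq ι]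

theorem sum_residueLift_add_eq_of_periodic {M : Type*} [AddCommMonoid M] {F : (ι → ℤ) → M}
    (hF : ∀ w, Function.Periodic F ((N : ℤ) • w)) (s : ι → ℤ) :
    ∑ m : ι → Fin N, F (residueLift m + s) = ∑ m : ι → Fin N, F (residueLift m) := by
  refine Fintype.sum_equiv (Equiv.addRight fun i ↦ (s i : Fin N)) _ _ fun m ↦ ?_
  have hshift : Equiv.addRight (fun i ↦ (s i : Fin N)) m =
      fun i ↦ (((residueLift m + s) i : ℤ) : Fin N) := by
    funext i
    simp [residueLift]
  rw [hshift, residueLift_intCast, (hF _).sub_eq]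

end PeriodicSums

section QuadraticForms

variable {ι R : Type*} [Fintype ι] [CommSemiring R]

theorem add_dotProduct_mulVec_add_of_isSymm {A : Matrix ι ι R} (hA : A.IsSymm) (x y : ι → R) :
    (x + y) ⬝ᵥ A *ᵥ (x + y) = x ⬝ᵥ A *ᵥ x + 2 * (x ⬝ᵥ A *ᵥ y) + y ⬝ᵥ A *ᵥ y := by
  have hcross : y ⬝ᵥ A *ᵥ x = x ⬝ᵥ A *ᵥ y := by
    rw [← dotProduct_transpose_mulVec, hA.eq]
  rw [mulVec_add, add_dotProduct, dotProduct_add, dotProduct_add, hcross]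
  ring

theorem dotProduct_diagonal_mulVec_self [DecidableEq ι] (d x : ι → R) :
    x ⬝ᵥ diagonal d *ᵥ x = ∑ i, d i * x i ^ 2 := by
  simp only [dotProduct, mulVec_diagonal]
  exact Finset.sum_congr rfl fun i _ ↦ by ring

theorem diagonal_mulVec_mul_of_mul_self_eq_one [DecidableEq ι] {d : ι → R} (hd : d * d = 1)
    (x : ι → R) : diagonal d *ᵥ (d * x) = x := by
  funext i
  rw [mulVec_diagonal, ← Pi.mul_apply, ← mul_assoc, hd, one_mul]

theorem dotProduct_mulVec_eq_sum_sum {κ : Type*} [Fintype κ] (A : Matrix ι κ R) (x : ι → R)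
    (y : κ → R) : x ⬝ᵥ A *ᵥ y = ∑ i, ∑ j, x i * A i j * y j := by
  simp only [dotProduct, mulVec, Finset.mul_sum, mul_assoc]

end QuadraticForms

/-- The value `exp (-(2πi/(4k)) x)` at level `k` of a coloured framed link in `S³` whose linking
matrix takes the value `x` on the colours. -/
noncomputable def wilsonPhase (k : ℕ) (x : ℤ) : ℂ :=
  Complex.exp (-(2 * Real.pi * Complex.I / (4 * (k : ℂ))) * x)

theorem wilsonPhase_add (k : ℕ) (x y : ℤ) :
    wilsonPhase k (x + y) = wilsonPhase k x * wilsonPhase k y := by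
  simp only [wilsonPhase, Int.cast_add, mul_add, Complex.exp_add]

section Surgery

variable {k : ℕ} [NeZero k]

theorem wilsonPhase_periodic : Function.Periodic (wilsonPhase k) (4 * k) := by
  intro x
  have hk : (k : ℂ) ≠ 0 := NeZero.ne _
  rw [wilsonPhase, wilsonPhase, ← Complex.exp_periodic]
  congr 1
  push_cast
  field_simp
  ring

variable {ι : Type*} [Fintype ι] {A : Matrix ι ι ℤ}

theorem wilsonPhase_dotProduct_mulVec_self_periodic (hA : A.IsSymm) (w : ι → ℤ) :
    Function.Periodic (fun v : ι → ℤ ↦ wilsonPhase k (v ⬝ᵥ A *ᵥ v))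
      (((2 * k : ℕ) : ℤ) • w) := by
  intro v
  have hexpand : (v + ((2 * k : ℕ) : ℤ) • w) ⬝ᵥ A *ᵥ (v + ((2 * k : ℕ) : ℤ) • w) =
      v ⬝ᵥ A *ᵥ v + (v ⬝ᵥ A *ᵥ w + k * (w ⬝ᵥ A *ᵥ w)) * (4 * k) := by
    rw [add_dotProduct_mulVec_add_of_isSymm hA]
    simp only [mulVec_smul, dotProduct_smul, smul_dotProduct, smul_eq_mul]
    push_cast
    ring
  simp only [hexpand]
  exact wilsonPhase_periodic.int_mul _ _

variable [DecidableEq ι]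

/-- `A` is the linking matrix of the surgery link, not necessarily algebraically split. If `A` is
unimodular, so that the surgered manifold is a homology sphere, then `s = A⁻¹ ℓ q`. -/
theorem homology_sphere_surgery_sum_general {κ : Type*} [Fintype κ] (hA : A.IsSymm)
    (𝕃 : Matrix κ κ ℤ) (q : κ → ℤ) (ℓ : Matrix ι κ ℤ) {s : ι → ℤ} (hs : A *ᵥ s = ℓ *ᵥ q) :
    ∑ m : ι → Fin (2 * k), wilsonPhase k (q ⬝ᵥ 𝕃 *ᵥ q + 2 * (residueLift m ⬝ᵥ ℓ *ᵥ q) +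
        residueLift m ⬝ᵥ A *ᵥ residueLift m) =
      (∑ m : ι → Fin (2 * k), wilsonPhase k (residueLift m ⬝ᵥ A *ᵥ residueLift m)) *
        wilsonPhase k (q ⬝ᵥ 𝕃 *ᵥ q - s ⬝ᵥ ℓ *ᵥ q) := by
  have hsquare (v : ι → ℤ) : q ⬝ᵥ 𝕃 *ᵥ q + 2 * (v ⬝ᵥ ℓ *ᵥ q) + v ⬝ᵥ A *ᵥ v =
      (v + s) ⬝ᵥ A *ᵥ (v + s) + (q ⬝ᵥ 𝕃 *ᵥ q - s ⬝ᵥ ℓ *ᵥ q) := by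
    rw [add_dotProduct_mulVec_add_of_isSymm hA, hs]
    ring
  simp only [hsquare, wilsonPhase_add, ← Finset.sum_mul]
  rw [sum_residueLift_add_eq_of_periodic (wilsonPhase_dotProduct_mulVec_self_periodic hA) s]

end Surgery

/-- Surgery on an algebraically split surgery link with coefficients `±1`:
summing the colours `m i ∈ {0,…,2k-1}` of the `n` surgery components, with
self-linkings `ε i = ±1` and linking numbers `ℓ i α` with the `N` observed components
of colours `q α`, against the observable of the full link, factorizes as the Gauss
sum over the surgery colours times `exp(-(2πi/(4k))(q ᵀ𝕃 q - Σ_i ε_i t_i²))`,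
where `t i = Σ_α q α * ℓ i α`.  This is the computational content of the statement
that the abelian Chern–Simons observables in a homology 3-sphere coincide with
observables in `S³`. -/
theorem homology_sphere_surgery_sum (k n N : ℕ) (hk : 1 ≤ k)
    (𝕃 : Matrix (Fin N) (Fin N) ℤ) (h𝕃 : 𝕃.IsSymm)
    (q : Fin N → ℤ) (ℓ : Fin n → Fin N → ℤ)
    (ε : Fin n → ℤ) (hε : ∀ i, ε i = 1 ∨ ε i = -1)
    (t : Fin n → ℤ) (ht : ∀ i, t i = ∑ α : Fin N, q α * ℓ i α) :
    (∑ m : Fin n → Fin (2 * k),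
        Complex.exp (-(2 * Real.pi * Complex.I / (4 * (k : ℂ))) *
          ((∑ α : Fin N, ∑ β : Fin N, (q α : ℂ) * (𝕃 α β : ℂ) * (q β : ℂ)) +
            2 * (∑ i : Fin n, ((m i : ℕ) : ℂ) * (t i : ℂ)) +
            (∑ i : Fin n, (ε i : ℂ) * ((m i : ℕ) : ℂ) ^ 2)))) =
      (∑ m : Fin n → Fin (2 * k),
        Complex.exp (-(2 * Real.pi * Complex.I / (4 * (k : ℂ))) *
          (∑ i : Fin n, (ε i : ℂ) * ((m i : ℕ) : ℂ) ^ 2))) *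
      Complex.exp (-(2 * Real.pi * Complex.I / (4 * (k : ℂ))) *
        ((∑ α : Fin N, ∑ β : Fin N, (q α : ℂ) * (𝕃 α β : ℂ) * (q β : ℂ)) -
          (∑ i : Fin n, (ε i : ℂ) * (t i : ℂ) ^ 2))) := by
  have : NeZero k := .of_pos hk
  obtain rfl : t = of ℓ *ᵥ q := funext fun i ↦ by simp [ht, mulVec, dotProduct, mul_comm]
  have hεε : ε * ε = 1 := funext fun i ↦ Int.isUnit_mul_self (Int.isUnit_iff.mpr (hε i))
  have hsurgery := homology_sphere_surgery_sum_general (k := k) (isSymm_diagonal ε) 𝕃 q (of ℓ)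
    (diagonal_mulVec_mul_of_mul_self_eq_one hεε _)
  simp only [dotProduct_diagonal_mulVec_self, dotProduct_mulVec_eq_sum_sum 𝕃] at hsurgery
  simpa [wilsonPhase, residueLift, dotProduct, pow_two, mul_assoc] using hsurgery
end

section
/- Let k ≥ 1, let 𝕃 be an N×N symmetric integer matrix, and let E be an N×N integer matrix with det E = 1 or det E = −1. Then Σ_{m} exp(−(πi/(2k)) Σ_{ij} m_i (Eᵀ𝕃E)_{ij} m_j) = Σ_{m} exp(−(πi/(2k)) Σ_{ij} m_i 𝕃_{ij} m_j), where both sums run over all functions m : Fin N → {0,1,…,2k−1}. That is, the colour-summed Gauss sum entering the U(1) Reshetikhin–Turaev invariant is invariant under unimodular congruence of the linking matrix, which is the algebraic content of handle-slide (Kirby move) invariance. -/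
open Complex Finset Matrix

/-!
Modulo `2k` the map `m ↦ E m` permutes the colour vectors, because `det E` is a unit of `ℤ/2k`,
and it turns the quadratic form of `Eᵀ𝕃E` into that of `𝕃`. The summand is well defined on residues
because `(w + 2k u)ᵀ𝕃(w + 2k u) = wᵀ𝕃w + 4k wᵀ𝕃u + 4k² uᵀ𝕃u`: the symmetry of `𝕃` doubles the cross
term and the modulus `2k` is even, so the form changes by a multiple of `4k`, a period of the phase.
-/

section QuadraticForm

variable {ι κ R : Type*} [Fintype ι] [Fintype κ]

theorem dotProduct_transpose_mul_mul_mulVec [CommSemiring R] (A : Matrix ι ι R) (E : Matrix ι κ R)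
    (v : κ → R) : v ⬝ᵥ (Eᵀ * A * E) *ᵥ v = (E *ᵥ v) ⬝ᵥ A *ᵥ (E *ᵥ v) := by
  rw [← mulVec_mulVec, ← mulVec_mulVec, dotProduct_transpose_mulVec, dotProduct_comm]

theorem dotProduct_mulVec_add_smul_self [CommSemiring R] {A : Matrix ι ι R} (hA : A.IsSymm)
    (w u : ι → R) (c : R) :
    (w + c • u) ⬝ᵥ A *ᵥ (w + c • u) =
      w ⬝ᵥ A *ᵥ w + 2 * c * (w ⬝ᵥ A *ᵥ u) + c ^ 2 * (u ⬝ᵥ A *ᵥ u) := by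
  have cross_comm : u ⬝ᵥ A *ᵥ w = w ⬝ᵥ A *ᵥ u := by
    rw [← dotProduct_transpose_mulVec, hA.eq]
  simp only [mulVec_add, mulVec_smul, dotProduct_add, add_dotProduct, smul_dotProduct,
    dotProduct_smul, smul_eq_mul, cross_comm]
  ring

theorem dotProduct_mulVec_self_modEq {A : Matrix ι ι ℤ} (hA : A.IsSymm) {n : ℤ} (hn : Even n)
    {v w : ι → ℤ} (hvw : ∀ i, v i ≡ w i [ZMOD n]) :
    v ⬝ᵥ A *ᵥ v ≡ w ⬝ᵥ A *ᵥ w [ZMOD 2 * n] := by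
  choose u hu using fun i ↦ (hvw i).symm.dvd
  obtain rfl : v = w + n • u := by
    ext i
    simpa [sub_eq_iff_eq_add'] using hu i
  obtain ⟨l, rfl⟩ := hn
  rw [dotProduct_mulVec_add_smul_self hA]
  refine (Int.modEq_iff_dvd.mpr ⟨w ⬝ᵥ A *ᵥ u + l * (u ⬝ᵥ A *ᵥ u), ?_⟩).symm
  ring

end QuadraticForm

section SumOverResidues

variable {ι M : Type*} [Fintype ι] [DecidableEq ι] [AddCommMonoid M] {n : ℕ}

theorem sum_pi_fin_eq_sum_pi_zmod [NeZero n] (f : (ι → ℤ) → M) :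
    ∑ m : ι → Fin n, f (fun i ↦ (m i : ℕ)) = ∑ x : ι → ZMod n, f (fun i ↦ (x i).val) := by
  have val_finEquiv (a : Fin n) : (ZMod.finEquiv n a).val = a := by
    cases n
    · exact a.elim0
    · rfl
  refine Fintype.sum_equiv (.piCongrRight fun _ ↦ (ZMod.finEquiv n).toEquiv) _ _ fun m ↦ ?_
  simp [val_finEquiv]

theorem mulVec_map_intCast_zmod_bijective {E : Matrix ι ι ℤ} (hE : IsCoprime E.det n) :
    Function.Bijective (E.map (Int.cast : ℤ → ZMod n)).mulVec := by
  have isUnit_map : IsUnit (E.map (Int.cast : ℤ → ZMod n)) := by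
    rw [isUnit_iff_isUnit_det, ← Int.cast_det, ZMod.coe_int_isUnit_iff_isCoprime]
    exact hE.symm
  exact ⟨mulVec_injective_of_isUnit isUnit_map, mulVec_surjective_iff_isUnit.mpr isUnit_map⟩

theorem sum_comp_mulVec_of_isCoprime_det [NeZero n] {E : Matrix ι ι ℤ} (hE : IsCoprime E.det n)
    {f : (ι → ℤ) → M} (hf : ∀ v w, (∀ i, v i ≡ w i [ZMOD n]) → f v = f w) :
    ∑ m : ι → Fin n, f (E *ᵥ fun i ↦ (m i : ℕ)) = ∑ m : ι → Fin n, f (fun i ↦ (m i : ℕ)) := by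
  rw [sum_pi_fin_eq_sum_pi_zmod fun v ↦ f (E *ᵥ v), sum_pi_fin_eq_sum_pi_zmod f]
  refine Fintype.sum_bijective _ (mulVec_map_intCast_zmod_bijective hE) _ _ fun x ↦ ?_
  refine hf _ _ fun i ↦ ?_
  rw [← ZMod.intCast_eq_intCast_iff]
  simp [mulVec, dotProduct]

end SumOverResidues

section GaussPhase

theorem exp_mul_intCast_eq_of_modEq {c : ℂ} {n a b : ℤ} (hc : exp (c * n) = 1)
    (hab : a ≡ b [ZMOD n]) : exp (c * a) = exp (c * b) := by
  obtain ⟨t, ht⟩ := hab.symm.dvd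
  rw [exp_eq_exp_iff_exp_sub_eq_one, ← mul_sub, ← Int.cast_sub, ht, Int.cast_mul,
    ← mul_assoc, mul_comm _ (t : ℂ), exp_int_mul, hc, _root_.one_zpow]

variable {ι : Type*} [Fintype ι]

/-- The summand `exp (-(πi/(2k)) vᵀAv)` of the `U(1)` Gauss sum at level `k`, extended from colour
vectors to all integer vectors `v` so that it can be evaluated at `E *ᵥ v` without reducing
modulo `2k`. -/
noncomputable def gaussPhase (k : ℕ) (A : Matrix ι ι ℤ) (v : ι → ℤ) : ℂ :=
  exp (-(Real.pi * I / (2 * (k : ℂ))) * (v ⬝ᵥ A *ᵥ v : ℤ))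

theorem gaussPhase_eq_exp_sum (k : ℕ) (A : Matrix ι ι ℤ) (v : ι → ℤ) :
    gaussPhase k A v =
      exp (-(Real.pi * I / (2 * (k : ℂ))) * ∑ i, ∑ j, (v i : ℂ) * (A i j : ℂ) * (v j : ℂ)) := by
  rw [gaussPhase, dot_mulVec_eq_sum_sum, Finset.sum_comm]
  push_cast
  rfl

theorem gaussPhase_transpose_mul_mul {κ : Type*} [Fintype κ] (k : ℕ) (A : Matrix ι ι ℤ)
    (E : Matrix ι κ ℤ) (v : κ → ℤ) :
    gaussPhase k (Eᵀ * A * E) v = gaussPhase k A (E *ᵥ v) := by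
  rw [gaussPhase, dotProduct_transpose_mul_mul_mulVec, gaussPhase]

theorem gaussPhase_eq_of_modEq {k : ℕ} (hk : k ≠ 0) {A : Matrix ι ι ℤ} (hA : A.IsSymm)
    {v w : ι → ℤ} (hvw : ∀ i, v i ≡ w i [ZMOD (2 * k : ℕ)]) :
    gaussPhase k A v = gaussPhase k A w := by
  have exp_period : exp (-(Real.pi * I / (2 * (k : ℂ))) * (2 * (2 * k : ℕ) : ℤ)) = 1 := by
    have exponent_eq : -(Real.pi * I / (2 * (k : ℂ))) * (2 * (2 * k : ℕ) : ℤ) =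
        -(2 * Real.pi * I) := by
      push_cast
      field_simp
    rw [exponent_eq, exp_neg, exp_two_pi_mul_I, inv_one]
  have even_modulus : Even ((2 * k : ℕ) : ℤ) := by simp
  exact exp_mul_intCast_eq_of_modEq exp_period (dotProduct_mulVec_self_modEq hA even_modulus hvw)

end GaussPhase

theorem kirby_handle_slide_invariance_general {ι : Type*} [Fintype ι] [DecidableEq ι] {k : ℕ}
    (hk : 1 ≤ k) {𝕃 : Matrix ι ι ℤ} (h𝕃 : 𝕃.IsSymm) {E : Matrix ι ι ℤ}
    (hE : IsCoprime E.det (2 * k : ℕ)) :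
    (∑ m : ι → Fin (2 * k),
        Complex.exp (-(Real.pi * Complex.I / (2 * (k : ℂ))) *
          (∑ i, ∑ j, ((m i : ℕ) : ℂ) * (((Eᵀ * 𝕃 * E) i j : ℤ) : ℂ) * ((m j : ℕ) : ℂ)))) =
    (∑ m : ι → Fin (2 * k),
        Complex.exp (-(Real.pi * Complex.I / (2 * (k : ℂ))) *
          (∑ i, ∑ j, ((m i : ℕ) : ℂ) * ((𝕃 i j : ℤ) : ℂ) * ((m j : ℕ) : ℂ)))) := by
  have k_ne_zero : k ≠ 0 := Nat.one_le_iff_ne_zero.mp hk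
  have : NeZero (2 * k) := ⟨mul_ne_zero two_ne_zero k_ne_zero⟩
  have sum_gaussPhase : ∑ m : ι → Fin (2 * k), gaussPhase k (Eᵀ * 𝕃 * E) (fun i ↦ (m i : ℕ)) =
      ∑ m : ι → Fin (2 * k), gaussPhase k 𝕃 (fun i ↦ (m i : ℕ)) := by
    simp only [gaussPhase_transpose_mul_mul]
    exact sum_comp_mulVec_of_isCoprime_det hE fun _ _ ↦ gaussPhase_eq_of_modEq k_ne_zero h𝕃
  simpa only [gaussPhase_eq_exp_sum, Int.cast_natCast] using sum_gaussPhase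

/-- Handle-slide (second Kirby move) invariance of the colour-summed Gauss sum:
for an `N × N` symmetric integer matrix `𝕃` and a unimodular integer matrix `E`
(`det E = ±1`), the sum over all colour vectors `m : Fin N → {0,…,2k-1}` of
`exp(-(πi/(2k)) mᵀ (Eᵀ𝕃E) m)` equals the corresponding sum for `𝕃`. -/
theorem kirby_handle_slide_invariance (k N : ℕ) (hk : 1 ≤ k)
    (𝕃 : Matrix (Fin N) (Fin N) ℤ) (h𝕃 : 𝕃.IsSymm)
    (E : Matrix (Fin N) (Fin N) ℤ) (hE : E.det = 1 ∨ E.det = -1) :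
    (∑ m : Fin N → Fin (2 * k),
        Complex.exp (-(Real.pi * Complex.I / (2 * (k : ℂ))) *
          (∑ i : Fin N, ∑ j : Fin N,
            ((m i : ℕ) : ℂ) * (((Eᵀ * 𝕃 * E) i j : ℤ) : ℂ) * ((m j : ℕ) : ℂ)))) =
    (∑ m : Fin N → Fin (2 * k),
        Complex.exp (-(Real.pi * Complex.I / (2 * (k : ℂ))) *
          (∑ i : Fin N, ∑ j : Fin N,
            ((m i : ℕ) : ℂ) * ((𝕃 i j : ℤ) : ℂ) * ((m j : ℕ) : ℂ)))) := by
  refine kirby_handle_slide_invariance_general hk h𝕃 ?_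
  exact hE.elim (fun h ↦ h ▸ isCoprime_one_left) (fun h ↦ h ▸ isCoprime_one_left.neg_left)
end

section
/- Let k ≥ 1 and p ≥ 1 be integers with p dividing 2k, let d = 2k/p, let ε ∈ {1,−1}, and let s be an integer. Then Σ_{b=0}^{p−1} exp(−(2πi/(4k))·(ε (d b)² + 2 (d b)(d s))) = exp((2πi/(4k))·ε (d s)²) · Σ_{b=0}^{p−1} exp(−(2πi/(4k))·ε (d b)²). This completed-square identity for colours restricted to multiples of d is the key step showing that the generalized invariant I_{(p,k)} associated with the subgroup ℤ_p ⊂ ℤ_{2k} is invariant under Kirby moves by the same argument as for I_k. -/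
open Complex Finset

/-!
Completing the square turns `a x² + 2 a x (d t)` with `x = d b` into `a (x + d t)² - a (d t)²`, that
is, into a shift of the summation index `b` by `t`. The shift does not change the sum, because
`2 k ∣ d p` makes `(d b)²` modulo `4 k`, and hence the summand, periodic in `b` with period `p`.
For `a = ε = ±1`, the linear coefficient `2 (d b) (d s)` has this form with `t = ε s`.
-/

theorem sum_range_add_eq_of_periodic {M : Type*} [AddCommMonoid M] {F : ℤ → M} {p : ℕ}
    (hF : Function.Periodic F p) (t : ℤ) :
    ∑ b ∈ range p, F (b + t) = ∑ b ∈ range p, F b := by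
  have shift_one : Function.Periodic (fun t : ℤ ↦ ∑ b ∈ range p, F (b + t)) 1 := by
    intro t
    cases p with
    | zero => simp
    | succ q =>
      have last_eq_first : F (q + (t + 1)) = F ((0 : ℕ) + t) := by
        rw [← hF ((0 : ℕ) + t)]
        push_cast
        ring_nf
      calc ∑ b ∈ range (q + 1), F (b + (t + 1))
          = ∑ b ∈ range q, F ((b + 1 : ℕ) + t) + F ((0 : ℕ) + t) := by
            rw [sum_range_succ, last_eq_first]
            simp only [Nat.cast_add, Nat.cast_one, add_assoc, add_comm t 1]
        _ = ∑ b ∈ range (q + 1), F (b + t) := (sum_range_succ' (fun b ↦ F (b + t)) q).symm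
  simpa using shift_one.int_mul t 0

theorem exp_neg_two_pi_I_div_mul_eq_of_modEq {N m n : ℤ} (hN : N ≠ 0) (h : m ≡ n [ZMOD N]) :
    exp (-(2 * Real.pi * I / N) * m) = exp (-(2 * Real.pi * I / N) * n) := by
  obtain ⟨j, hj⟩ := h.dvd
  have hN' : (N : ℂ) ≠ 0 := Int.cast_ne_zero.mpr hN
  have hn : (n : ℂ) = m + N * j := by exact_mod_cast eq_add_of_sub_eq' hj
  rw [exp_eq_exp_iff_exists_int]
  refine ⟨j, ?_⟩
  rw [hn]
  field_simp
  ring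

theorem mul_add_sq_modEq_of_two_mul_dvd {k d p : ℤ} (h : 2 * k ∣ d * p) (x : ℤ) :
    (d * (x + p)) ^ 2 ≡ (d * x) ^ 2 [ZMOD 4 * k] := by
  obtain ⟨m, hm⟩ := h
  refine (Int.modEq_iff_dvd.mpr ⟨m * (d * x + k * m), ?_⟩).symm
  linear_combination (2 * d * x + d * p + 2 * k * m) * hm

theorem periodic_exp_neg_two_pi_I_div_mul_sq {k d p : ℤ} (hk : k ≠ 0) (h : 2 * k ∣ d * p) (a : ℤ) :
    Function.Periodic
      (fun x : ℤ ↦ exp (-(2 * Real.pi * I / (4 * (k : ℂ))) * (a * (d * x) ^ 2))) p := by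
  intro x
  have hmod := (mul_add_sq_modEq_of_two_mul_dvd h x).mul_left a
  have hexp := exp_neg_two_pi_I_div_mul_eq_of_modEq (mul_ne_zero four_ne_zero hk) hmod
  exact_mod_cast hexp

theorem exp_neg_mul_completed_square (c a x t : ℂ) :
    exp (-c * (a * x ^ 2 + 2 * x * (a * t))) =
      exp (c * (a * t ^ 2)) * exp (-c * (a * (x + t) ^ 2)) := by
  rw [← exp_add]
  ring_nf

theorem restricted_colour_completed_square_general {k d : ℤ} {p : ℕ} (hk : k ≠ 0)
    (h : 2 * k ∣ d * p) (a t : ℤ) :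
    ∑ b ∈ range p,
        exp (-(2 * Real.pi * I / (4 * (k : ℂ))) *
          (a * (d * b) ^ 2 + 2 * (d * b) * (a * (d * t)))) =
      exp ((2 * Real.pi * I / (4 * (k : ℂ))) * (a * (d * t) ^ 2)) *
        ∑ b ∈ range p, exp (-(2 * Real.pi * I / (4 * (k : ℂ))) * (a * (d * b) ^ 2)) := by
  have shift := sum_range_add_eq_of_periodic (periodic_exp_neg_two_pi_I_div_mul_sq hk h a) t
  push_cast at shift
  simp only [exp_neg_mul_completed_square, ← mul_sum, ← mul_add, shift]

/-- The completed-square identity for colours restricted to multiples of `d = 2k/p`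
(the subgroup `ℤ_p ⊆ ℤ_{2k}`): for `ε = ±1` and any integer `s`,
`Σ_{b=0}^{p-1} exp(-(2πi/(4k))(ε (db)² + 2(db)(ds)))
  = exp((2πi/(4k)) ε (ds)²) · Σ_{b=0}^{p-1} exp(-(2πi/(4k)) ε (db)²)`.
This is the key step in the Kirby-move invariance of the generalized invariant
`I_{(p,k)}`. -/
theorem restricted_colour_completed_square (k p : ℕ) (hk : 1 ≤ k) (hp : 1 ≤ p)
    (hdvd : p ∣ 2 * k) (d : ℕ) (hd : d = 2 * k / p)
    (ε : ℤ) (hε : ε = 1 ∨ ε = -1) (s : ℤ) :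
    (∑ b ∈ Finset.range p,
        Complex.exp (-(2 * Real.pi * Complex.I / (4 * (k : ℂ))) *
          ((ε : ℂ) * ((d : ℂ) * (b : ℂ)) ^ 2 +
            2 * ((d : ℂ) * (b : ℂ)) * ((d : ℂ) * (s : ℂ))))) =
      Complex.exp ((2 * Real.pi * Complex.I / (4 * (k : ℂ))) *
          ((ε : ℂ) * ((d : ℂ) * (s : ℂ)) ^ 2)) *
        (∑ b ∈ Finset.range p,
          Complex.exp (-(2 * Real.pi * Complex.I / (4 * (k : ℂ))) *
            ((ε : ℂ) * ((d : ℂ) * (b : ℂ)) ^ 2))) := by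
  have hdp : (2 * k : ℤ) ∣ d * p := by exact_mod_cast (hd ▸ Nat.div_mul_cancel hdvd).symm.dvd
  rcases hε with rfl | rfl
  · simpa using restricted_colour_completed_square_general (by omega) hdp 1 s
  · simpa using restricted_colour_completed_square_general (by omega) hdp (-1) (-s)
end
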